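/- For λ with Im(λ) > 0, the map φ'(z) = −1/(z+λ) is a strict hyperbolic contraction of the upper half plane: dist_ℍ(φ'(u), φ'(v)) < dist_ℍ(u,v) for all distinct u, v in the upper half plane. -/

import Mathlib

theorem stmt7 (lam : ℂ) (hlam : 0 < lam.im) (u v : UpperHalfPlane) (huv : u ≠ v)
    (hu : 0 < (-1 / ((u : ℂ) + lam)).im) (hv : 0 < (-1 / ((v : ℂ) + lam)).im) :
    dist (⟨-1 / ((u : ℂ) + lam), hu⟩ : UpperHalfPlane)
         (⟨-1 / ((v : ℂ) + lam), hv⟩ : UpperHalfPlane) < dist u v := by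
  have key : ∀ w : ℂ, (-1 / w).im = w.im / ‖w‖ ^ 2 := by
    intro w
    rw [← Complex.normSq_eq_norm_sq, neg_div, one_div, Complex.neg_im, Complex.inv_im]
    ring
  have hup : 0 < (u : ℂ).im := u.im_pos
  have hvp : 0 < (v : ℂ).im := v.im_pos
  have ha : (u : ℂ) + lam ≠ 0 := by
    intro h
    rw [h] at hu
    simp at hu
  have hb : (v : ℂ) + lam ≠ 0 := by
    intro h
    rw [h] at hv
    simp at hv
  have hna := norm_pos_iff.2 ha
  have hnb := norm_pos_iff.2 hb
  have huv' : (u : ℂ) ≠ v := fun h => huv (UpperHalfPlane.ext h)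
  have hd : 0 < dist (u : ℂ) v := dist_pos.2 huv'
  have hdist : dist (-1 / ((u : ℂ) + lam)) (-1 / ((v : ℂ) + lam))
      = dist (u : ℂ) v / (‖(u : ℂ) + lam‖ * ‖(v : ℂ) + lam‖) := by
    rw [dist_eq_norm, dist_eq_norm, ← norm_mul, ← norm_div]
    congr 1
    field_simp
    ring
  rw [← abs_of_nonneg (dist_nonneg (x := u) (y := v)),
    ← abs_of_nonneg (dist_nonneg (x := (⟨_, hu⟩ : UpperHalfPlane)) (y := ⟨_, hv⟩)),
    ← Real.cosh_lt_cosh, UpperHalfPlane.cosh_dist, UpperHalfPlane.cosh_dist]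
  change 1 + dist (-1 / ((u : ℂ) + lam)) (-1 / ((v : ℂ) + lam)) ^ 2
    / (2 * (-1 / ((u : ℂ) + lam)).im * (-1 / ((v : ℂ) + lam)).im)
    < 1 + dist (u : ℂ) v ^ 2 / (2 * (u : ℂ).im * (v : ℂ).im)
  rw [hdist, key, key, Complex.add_im, Complex.add_im]
  have e : (dist (u : ℂ) v / (‖(u : ℂ) + lam‖ * ‖(v : ℂ) + lam‖)) ^ 2
      / (2 * (((u : ℂ).im + lam.im) / ‖(u : ℂ) + lam‖ ^ 2)
        * (((v : ℂ).im + lam.im) / ‖(v : ℂ) + lam‖ ^ 2))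
      = dist (u : ℂ) v ^ 2 / (2 * ((u : ℂ).im + lam.im) * ((v : ℂ).im + lam.im)) := by
    have h1 : (u : ℂ).im + lam.im ≠ 0 := by positivity
    have h2 : (v : ℂ).im + lam.im ≠ 0 := by positivity
    field_simp
  rw [e]
  have : 2 * (u : ℂ).im * (v : ℂ).im < 2 * ((u : ℂ).im + lam.im) * ((v : ℂ).im + lam.im) := by
    nlinarith [mul_pos hup hlam, mul_pos hvp hlam, mul_pos hlam hlam]
  have := div_lt_div_of_pos_left (pow_pos hd 2) (by positivity) this
  linarith
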